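/- arXiv:1412.0844 — 2 statements merged into one kernel-verified Lean document; each statement's English description precedes it below -/
import Mathlib

section
/- Let f and g be holomorphic functions on Π⁺ and suppose there exist constants A ≥ 0 and C ≥ 0 such that |f(z)| ≤ C·e^{A·Re(z)} and |g(z)| ≤ C·e^{A·Re(z)} for all z ∈ Π⁺. Let L ⊆ ℕ* satisfy Σ_{n∈L} 1/n = ∞. If f(n) = g(n) for every n ∈ L, then f(z) = g(z) for every z ∈ Π⁺. -/
/-!
After multiplication by `exp (-A z)` the difference of the two functions is a bounded holomorphic
function `h` on the right half-plane. By the Schwarz lemma, a zero `a` of `h` can be divided out as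
a Blaschke factor `(z - a) / (z + conj a)` without increasing the bound `M` of `h`, so that
`‖h z‖ ≤ M * ∏ ‖(z - a) / (z + conj a)‖` over any finite set of zeros. Each factor is at most
`exp (-c * a.re / (1 + ‖a‖ ^ 2))` with `c > 0` depending only on `z`, so `h z ≠ 0` forces the
Blaschke condition `∑ a.re / (1 + ‖a‖ ^ 2) < ∞`. For zeros at positive integers `n` this series is
comparable to `∑ 1 / n`.
-/

open Topology ComplexConjugate

/-- The open right half-plane `Π⁺`; reducible, so that membership unfolds to `0 < z.re`. -/
abbrev rightHalfPlane : Set ℂ := {z | 0 < z.re}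

lemma rightHalfPlane_mem_nhds {a : ℂ} (ha : 0 < a.re) : rightHalfPlane ∈ 𝓝 a :=
  (isOpen_lt continuous_const Complex.continuous_re).mem_nhds ha

section BlaschkeFactor

variable {a w z : ℂ}

/-- The Blaschke factor of the right half-plane with zero `a`, a conformal map onto the unit disc
when `0 < a.re`. At its pole `-conj a`, outside the half-plane, it takes the junk value `0`. -/
noncomputable def blaschkeFactor (a z : ℂ) : ℂ := (z - a) / (z + conj a)

/-- The inverse of `blaschkeFactor a` as a map from the unit disc to the right half-plane. -/
noncomputable def blaschkeFactorInv (a w : ℂ) : ℂ := (a + conj a * w) / (1 - w)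

lemma add_conj_ne_zero (ha : 0 < a.re) (hz : 0 < z.re) : z + conj a ≠ 0 := by
  intro h
  have hre : z.re + a.re = 0 := by simpa using congrArg Complex.re h
  linarith

lemma norm_sub_sq_add_four_mul_re_mul_re (z a : ℂ) :
    ‖z - a‖ ^ 2 + 4 * z.re * a.re = ‖z + conj a‖ ^ 2 := by
  simp only [Complex.sq_norm, Complex.normSq_apply, Complex.sub_re, Complex.sub_im, Complex.add_re,
    Complex.add_im, Complex.conj_re, Complex.conj_im]
  ring

lemma norm_blaschkeFactor_sq (hden : z + conj a ≠ 0) :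
    ‖blaschkeFactor a z‖ ^ 2 = 1 - 4 * z.re * a.re / ‖z + conj a‖ ^ 2 := by
  rw [blaschkeFactor, norm_div, div_pow, eq_sub_iff_add_eq, ← add_div,
    norm_sub_sq_add_four_mul_re_mul_re, div_self (pow_ne_zero 2 (norm_ne_zero_iff.mpr hden))]

lemma norm_blaschkeFactor_lt_one (ha : 0 < a.re) (hz : 0 < z.re) : ‖blaschkeFactor a z‖ < 1 := by
  have hden : 0 < ‖z + conj a‖ := norm_pos_iff.mpr (add_conj_ne_zero ha hz)
  rw [← sq_lt_one_iff₀ (norm_nonneg _), norm_blaschkeFactor_sq (add_conj_ne_zero ha hz),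
    sub_lt_self_iff]
  positivity

lemma blaschkeFactor_ne_zero (ha : 0 < a.re) (hz : 0 < z.re) (hza : z ≠ a) :
    blaschkeFactor a z ≠ 0 :=
  div_ne_zero (sub_ne_zero.mpr hza) (add_conj_ne_zero ha hz)

lemma blaschkeFactorInv_zero (a : ℂ) : blaschkeFactorInv a 0 = a := by
  simp [blaschkeFactorInv]

lemma blaschkeFactorInv_blaschkeFactor (ha : 0 < a.re) (hz : 0 < z.re) :
    blaschkeFactorInv a (blaschkeFactor a z) = z := by
  have hden : z + conj a ≠ 0 := add_conj_ne_zero ha hz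
  have hnum : a + conj a * ((z - a) / (z + conj a)) = z * ((a + conj a) / (z + conj a)) := by
    field_simp
    ring
  have hsub : 1 - (z - a) / (z + conj a) = (a + conj a) / (z + conj a) := by
    field_simp
    ring
  rw [blaschkeFactorInv, blaschkeFactor, hnum, hsub,
    mul_div_cancel_right₀ _ (div_ne_zero (add_conj_ne_zero ha ha) hden)]

lemma blaschkeFactorInv_re (a w : ℂ) :
    (blaschkeFactorInv a w).re = a.re * (1 - ‖w‖ ^ 2) / ‖1 - w‖ ^ 2 := by
  rw [blaschkeFactorInv, Complex.div_re, ← add_div, ← Complex.sq_norm (1 - w), Complex.sq_norm w,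
    Complex.normSq_apply]
  congr 1
  simp only [Complex.add_re, Complex.add_im, Complex.mul_re, Complex.mul_im, Complex.conj_re,
    Complex.conj_im, Complex.sub_re, Complex.sub_im, Complex.one_re, Complex.one_im]
  ring

lemma blaschkeFactorInv_re_pos (ha : 0 < a.re) (hw : ‖w‖ < 1) :
    0 < (blaschkeFactorInv a w).re := by
  have hden : 0 < ‖1 - w‖ := norm_pos_iff.mpr (isUnit_one_sub_of_norm_lt_one hw).ne_zero
  have hnum : 0 < 1 - ‖w‖ ^ 2 := sub_pos.mpr ((sq_lt_one_iff₀ (norm_nonneg w)).mpr hw)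
  rw [blaschkeFactorInv_re]
  positivity

lemma differentiableOn_blaschkeFactorInv (a : ℂ) :
    DifferentiableOn ℂ (blaschkeFactorInv a) (Metric.ball 0 1) := by
  refine DifferentiableOn.div (by fun_prop) (by fun_prop) fun w hw => ?_
  exact (isUnit_one_sub_of_norm_lt_one (mem_ball_zero_iff.mp hw)).ne_zero

lemma norm_add_conj_sq_le (z a : ℂ) : ‖z + conj a‖ ^ 2 ≤ (1 + ‖z‖ ^ 2) * (1 + ‖a‖ ^ 2) :=
  calc
    ‖z + conj a‖ ^ 2 ≤ (‖z‖ + ‖a‖) ^ 2 := by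
      gcongr
      simpa using norm_add_le z (conj a)
    _ ≤ (1 + ‖z‖ ^ 2) * (1 + ‖a‖ ^ 2) := by nlinarith [sq_nonneg (1 - ‖z‖ * ‖a‖)]

lemma norm_blaschkeFactor_le_exp (ha : 0 < a.re) (hz : 0 < z.re) :
    ‖blaschkeFactor a z‖ ≤
      Real.exp (-(2 * z.re / (1 + ‖z‖ ^ 2) * (a.re / (1 + ‖a‖ ^ 2)))) := by
  have hden : 0 < ‖z + conj a‖ := norm_pos_iff.mpr (add_conj_ne_zero ha hz)
  rw [← sq_le_sq₀ (norm_nonneg _) (Real.exp_pos _).le]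
  calc
    ‖blaschkeFactor a z‖ ^ 2 = 1 - 4 * z.re * a.re / ‖z + conj a‖ ^ 2 :=
      norm_blaschkeFactor_sq (add_conj_ne_zero ha hz)
    _ ≤ 1 - 4 * z.re * a.re / ((1 + ‖z‖ ^ 2) * (1 + ‖a‖ ^ 2)) := by
      gcongr
      exact norm_add_conj_sq_le z a
    _ ≤ Real.exp (-(4 * z.re * a.re / ((1 + ‖z‖ ^ 2) * (1 + ‖a‖ ^ 2)))) :=
      Real.one_sub_le_exp_neg _
    _ = Real.exp (-(2 * z.re / (1 + ‖z‖ ^ 2) * (a.re / (1 + ‖a‖ ^ 2)))) ^ 2 := by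
      rw [← Real.exp_nat_mul]
      congr 1
      push_cast
      field_simp
      norm_num

end BlaschkeFactor

section Schwarz

variable {E : Type*} [NormedAddCommGroup E] [NormedSpace ℂ E] {h : ℂ → E} {M : ℝ} {a z : ℂ}

lemma norm_le_mul_norm_blaschkeFactor (hd : DifferentiableOn ℂ h rightHalfPlane)
    (hM : ∀ w : ℂ, 0 < w.re → ‖h w‖ ≤ M) (ha : 0 < a.re) (h0 : h a = 0) (hz : 0 < z.re) :
    ‖h z‖ ≤ M * ‖blaschkeFactor a z‖ := by
  have hmaps : Set.MapsTo (blaschkeFactorInv a) (Metric.ball 0 1) rightHalfPlane := fun w hw =>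
    blaschkeFactorInv_re_pos ha (mem_ball_zero_iff.mp hw)
  have hcenter : (h ∘ blaschkeFactorInv a) 0 = 0 := by
    rw [Function.comp_apply, blaschkeFactorInv_zero, h0]
  have hbound : Set.MapsTo (h ∘ blaschkeFactorInv a) (Metric.ball 0 1)
      (Metric.closedBall ((h ∘ blaschkeFactorInv a) 0) M) := fun w hw => by
    rw [hcenter, mem_closedBall_zero_iff]
    exact hM _ (hmaps hw)
  have hschwarz := Complex.dist_le_div_mul_dist_of_mapsTo_ball
    (hd.comp (differentiableOn_blaschkeFactorInv a) hmaps) hbound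
    (mem_ball_zero_iff.mpr (norm_blaschkeFactor_lt_one ha hz))
  rwa [hcenter, dist_zero_right, dist_zero_right, div_one, Function.comp_apply,
    blaschkeFactorInv_blaschkeFactor ha hz] at hschwarz

/-- The quotient of `h` by `blaschkeFactor a` for a function `h` vanishing at `a`. It is written
with `dslope`, which supplies the right value at the removable singularity `a`. -/
noncomputable def blaschkeQuotient (h : ℂ → E) (a z : ℂ) : E := (z + conj a) • dslope h a z

lemma blaschkeFactor_smul_blaschkeQuotient (ha : 0 < a.re) (h0 : h a = 0) (hz : 0 < z.re) :
    blaschkeFactor a z • blaschkeQuotient h a z = h z := by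
  rw [blaschkeFactor, blaschkeQuotient, smul_smul, div_mul_cancel₀ _ (add_conj_ne_zero ha hz),
    sub_smul_dslope, h0, sub_zero]

lemma blaschkeQuotient_eq_zero {b : ℂ} (ha : 0 < a.re) (h0 : h a = 0) (hb : 0 < b.re)
    (hba : b ≠ a) (hb0 : h b = 0) : blaschkeQuotient h a b = 0 := by
  rw [← blaschkeFactor_smul_blaschkeQuotient ha h0 hb] at hb0
  exact (smul_eq_zero.mp hb0).resolve_left (blaschkeFactor_ne_zero ha hb hba)

variable [CompleteSpace E]

lemma differentiableOn_blaschkeQuotient (hd : DifferentiableOn ℂ h rightHalfPlane) (ha : 0 < a.re) :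
    DifferentiableOn ℂ (blaschkeQuotient h a) rightHalfPlane :=
  DifferentiableOn.smul (by fun_prop)
    ((Complex.differentiableOn_dslope (rightHalfPlane_mem_nhds ha)).mpr hd)

lemma norm_blaschkeQuotient_le (hd : DifferentiableOn ℂ h rightHalfPlane)
    (hM : ∀ w : ℂ, 0 < w.re → ‖h w‖ ≤ M) (ha : 0 < a.re) (h0 : h a = 0) (hz : 0 < z.re) :
    ‖blaschkeQuotient h a z‖ ≤ M := by
  have hoff : ∀ w : ℂ, 0 < w.re → w ≠ a → ‖blaschkeQuotient h a w‖ ≤ M := by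
    intro w hw hwa
    have hschwarz := norm_le_mul_norm_blaschkeFactor hd hM ha h0 hw
    rw [← blaschkeFactor_smul_blaschkeQuotient ha h0 hw, norm_smul, mul_comm M] at hschwarz
    exact le_of_mul_le_mul_left hschwarz (norm_pos_iff.mpr (blaschkeFactor_ne_zero ha hw hwa))
  rcases eq_or_ne z a with rfl | hza
  · have hnhds : rightHalfPlane ∈ 𝓝 z := rightHalfPlane_mem_nhds hz
    have hcont : ContinuousAt (blaschkeQuotient h z) z :=
      ((differentiableOn_blaschkeQuotient hd hz).differentiableAt hnhds).continuousAt
    refine le_of_tendsto (hcont.norm.tendsto.mono_left (nhdsWithin_le_nhds (s := {z}ᶜ))) ?_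
    filter_upwards [mem_nhdsWithin_of_mem_nhds hnhds, self_mem_nhdsWithin] with w hw hwz
    exact hoff w hw hwz
  · exact hoff z hz hza

variable {ι : Type*} {u : ι → ℂ}

lemma norm_le_mul_prod_norm_blaschkeFactor (s : Finset ι) (hd : DifferentiableOn ℂ h rightHalfPlane)
    (hM : ∀ w : ℂ, 0 < w.re → ‖h w‖ ≤ M) (hu : Set.InjOn u s) (hre : ∀ i ∈ s, 0 < (u i).re)
    (h0 : ∀ i ∈ s, h (u i) = 0) (hz : 0 < z.re) :
    ‖h z‖ ≤ M * ∏ i ∈ s, ‖blaschkeFactor (u i) z‖ := by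
  induction s using Finset.cons_induction generalizing h with
  | empty => simpa using hM z hz
  | cons j s hj ih =>
    simp only [Finset.mem_cons, forall_eq_or_imp] at hre h0
    have hne : ∀ i ∈ s, u i ≠ u j := fun i hi hij =>
      hj (hu (by simp [hi]) (by simp) hij ▸ hi)
    have hquot := ih (differentiableOn_blaschkeQuotient hd hre.1)
      (fun w => norm_blaschkeQuotient_le hd hM hre.1 h0.1) (hu.mono (by simp)) hre.2
      (fun i hi => blaschkeQuotient_eq_zero hre.1 h0.1 (hre.2 i hi) (hne i hi) (h0.2 i hi))
    calc
      ‖h z‖ = ‖blaschkeFactor (u j) z‖ * ‖blaschkeQuotient h (u j) z‖ := by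
        rw [← norm_smul, blaschkeFactor_smul_blaschkeQuotient hre.1 h0.1 hz]
      _ ≤ ‖blaschkeFactor (u j) z‖ * (M * ∏ i ∈ s, ‖blaschkeFactor (u i) z‖) := by gcongr
      _ = M * ∏ i ∈ s.cons j hj, ‖blaschkeFactor (u i) z‖ := by
        rw [Finset.prod_cons, mul_left_comm]

lemma norm_le_mul_exp_neg_sum (s : Finset ι) (hd : DifferentiableOn ℂ h rightHalfPlane)
    (hM : ∀ w : ℂ, 0 < w.re → ‖h w‖ ≤ M) (hu : Set.InjOn u s) (hre : ∀ i ∈ s, 0 < (u i).re)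
    (h0 : ∀ i ∈ s, h (u i) = 0) (hz : 0 < z.re) :
    ‖h z‖ ≤
      M * Real.exp (-(2 * z.re / (1 + ‖z‖ ^ 2) * ∑ i ∈ s, (u i).re / (1 + ‖u i‖ ^ 2))) := by
  have hM0 : 0 ≤ M := (norm_nonneg _).trans (hM z hz)
  refine (norm_le_mul_prod_norm_blaschkeFactor s hd hM hu hre h0 hz).trans ?_
  rw [Finset.mul_sum, ← Finset.sum_neg_distrib, Real.exp_sum]
  gcongr with i hi
  exact norm_blaschkeFactor_le_exp (hre i hi) hz

theorem summable_re_div_one_add_norm_sq_of_zeros (hd : DifferentiableOn ℂ h rightHalfPlane)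
    (hM : ∀ w : ℂ, 0 < w.re → ‖h w‖ ≤ M) (hu : Function.Injective u) (hre : ∀ i, 0 < (u i).re)
    (h0 : ∀ i, h (u i) = 0) (hz : 0 < z.re) (hhz : h z ≠ 0) :
    Summable fun i => (u i).re / (1 + ‖u i‖ ^ 2) := by
  have hnorm : 0 < ‖h z‖ := norm_pos_iff.mpr hhz
  have hc : 0 < 2 * z.re / (1 + ‖z‖ ^ 2) := by positivity
  refine summable_of_sum_le (c := Real.log (M / ‖h z‖) / (2 * z.re / (1 + ‖z‖ ^ 2)))
    (fun i => div_nonneg (hre i).le (by positivity)) fun s => ?_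
  have hbound := norm_le_mul_exp_neg_sum s hd hM hu.injOn (fun i _ => hre i) (fun i _ => h0 i) hz
  rw [Real.exp_neg, ← div_eq_mul_inv, le_div_iff₀ (Real.exp_pos _)] at hbound
  rw [le_div_iff₀' hc, Real.le_log_iff_exp_le (div_pos (hnorm.trans_le (hM z hz)) hnorm),
    le_div_iff₀' hnorm]
  exact hbound

end Schwarz

lemma norm_exp_neg_ofReal_mul_smul_le {E : Type*} [NormedAddCommGroup E] [NormedSpace ℂ E]
    {x : E} {A C : ℝ} {z : ℂ} (hx : ‖x‖ ≤ C * Real.exp (A * z.re)) :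
    ‖Complex.exp (-(A * z)) • x‖ ≤ C := by
  rw [norm_smul, Complex.norm_exp, Complex.neg_re, Complex.re_ofReal_mul, Real.exp_neg,
    inv_mul_le_iff₀' (Real.exp_pos _)]
  exact hx

theorem stmt_12_general {E ι : Type*} [NormedAddCommGroup E] [NormedSpace ℂ E] [CompleteSpace E]
    {f g : ℂ → E} {A C : ℝ} (hf : DifferentiableOn ℂ f rightHalfPlane)
    (hg : DifferentiableOn ℂ g rightHalfPlane)
    (hfC : ∀ z : ℂ, 0 < z.re → ‖f z‖ ≤ C * Real.exp (A * z.re))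
    (hgC : ∀ z : ℂ, 0 < z.re → ‖g z‖ ≤ C * Real.exp (A * z.re))
    {u : ι → ℂ} (hu : Function.Injective u) (hre : ∀ i, 0 < (u i).re)
    (hdiv : ¬ Summable fun i => (u i).re / (1 + ‖u i‖ ^ 2)) (heq : ∀ i, f (u i) = g (u i))
    {z : ℂ} (hz : 0 < z.re) : f z = g z := by
  by_contra hne
  have hsub : ∀ w : ℂ, 0 < w.re → ‖f w - g w‖ ≤ (C + C) * Real.exp (A * w.re) := fun w hw => by
    rw [add_mul]
    exact norm_sub_le_of_le (hfC w hw) (hgC w hw)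
  refine hdiv (summable_re_div_one_add_norm_sq_of_zeros
    (h := fun w => Complex.exp (-(A * w)) • (f w - g w))
    (DifferentiableOn.smul (by fun_prop) (hf.sub hg))
    (fun w hw => norm_exp_neg_ofReal_mul_smul_le (hsub w hw)) hu hre (fun i => ?_) hz
    (smul_ne_zero (Complex.exp_ne_zero _) (sub_ne_zero.mpr hne)))
  rw [heq, sub_self, smul_zero]

lemma one_div_le_two_mul_div_one_add_sq {x : ℝ} (hx : 1 ≤ x) :
    1 / x ≤ 2 * (x / (1 + x ^ 2)) := by
  rw [mul_div_assoc', div_le_div_iff₀ (by positivity) (by positivity)]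
  nlinarith

lemma summable_one_div_natCast_of_summable_div_one_add_sq {L : Set ℕ} (hL : ∀ n ∈ L, 0 < n)
    (hs : Summable fun n : L => (n : ℝ) / (1 + (n : ℝ) ^ 2)) :
    Summable fun n : L => 1 / (n : ℝ) :=
  (hs.mul_left 2).of_nonneg_of_le (fun n => by positivity) fun n =>
    one_div_le_two_mul_div_one_add_sq (Nat.one_le_cast.mpr (hL n n.2))

/-- Two holomorphic functions on `Π⁺ = {Re z > 0}` of exponential growth
`≤ C·e^{A·Re z}` which agree on a Müntz subset `L ⊆ ℕ*` (i.e. `Σ_{n∈L} 1/n = ∞`)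
agree on all of `Π⁺`. -/
theorem stmt_12 (f g : ℂ → ℂ)
    (hf : DifferentiableOn ℂ f {z : ℂ | 0 < z.re})
    (hg : DifferentiableOn ℂ g {z : ℂ | 0 < z.re})
    (A C : ℝ) (hA : 0 ≤ A) (hC : 0 ≤ C)
    (hfb : ∀ z : ℂ, 0 < z.re → ‖f z‖ ≤ C * Real.exp (A * z.re))
    (hgb : ∀ z : ℂ, 0 < z.re → ‖g z‖ ≤ C * Real.exp (A * z.re))
    (L : Set ℕ) (hL0 : ∀ n ∈ L, 0 < n)
    (hMuntz : ¬ Summable fun n : L => (1 : ℝ) / ((n : ℕ) : ℝ))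
    (heq : ∀ n ∈ L, f (n : ℕ) = g (n : ℕ)) :
    ∀ z : ℂ, 0 < z.re → f z = g z := by
  intro z hz
  refine stmt_12_general (u := fun n : L => ((n : ℕ) : ℂ)) hf hg hfb hgb
    (Nat.cast_injective.comp Subtype.val_injective) (fun n => by simpa using hL0 n n.2)
    (fun hs => hMuntz (summable_one_div_natCast_of_summable_div_one_add_sq hL0 ?_))
    (fun n => heq n n.2) hz
  simpa using hs
end

section
/- Let M, M̃ > 0, Q, Q̃ ∈ ℝ with Q ≠ 0, Λ, Λ̃ > 0, and let q ∈ ℝ with q ≠ 0. Write F = F_{M,Q,Λ} and F̃ = F_{M̃,Q̃,Λ̃}. Suppose there is a nonempty open interval I ⊂ (0, ∞) such that F(r) > 0 and F̃(r) > 0 for all r ∈ I and qQ/√(F(r)) = qQ̃/√(F̃(r)) for all r ∈ I. Then M = M̃, Q = Q̃ and Λ = Λ̃. -/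
/-- The de Sitter–Reissner–Nordström potential `F_{M,Q,Λ}(r) = 1 − 2M/r + Q²/r² − Λr²/3`. -/
noncomputable def Fpot (M Q Λ r : ℝ) : ℝ := 1 - 2 * M / r + Q ^ 2 / r ^ 2 - Λ * r ^ 2 / 3

/-!
Squaring `Q / √F = Q̃ / √F̃` gives `Q² F̃ = Q̃² F`, in which the `r⁻²` terms cancel. Multiplied by
`r`, this is a cubic equation in `r` without quadratic term, so the sum of its roots vanishes and it
cannot have three positive roots unless all its coefficients are zero. This yields `Q² = Q̃²`,
`M = M̃` and `Λ = Λ̃`. Since `F` depends on `Q` only through `Q²`, now `F = F̃`, and the original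
equation determines the sign of `Q`.
-/

theorem depressed_cubic_coeffs_eq_zero {R : Type*} [CommRing R] [NoZeroDivisors R]
    {a b c x y z : R} (hxy : x ≠ y) (hxz : x ≠ z) (hyz : y ≠ z) (hsum : x + y + z ≠ 0)
    (hx : a + b * x + c * x ^ 3 = 0) (hy : a + b * y + c * y ^ 3 = 0)
    (hz : a + b * z + c * z ^ 3 = 0) : a = 0 ∧ b = 0 ∧ c = 0 := by
  have slope {w : R} (hxw : x ≠ w) (hw : a + b * w + c * w ^ 3 = 0) :
      b + c * (x ^ 2 + x * w + w ^ 2) = 0 := by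
    refine (mul_eq_zero.1 ?_).resolve_left (sub_ne_zero.2 hxw)
    linear_combination hx - hw
  have hc : c = 0 := by
    refine (mul_eq_zero.1 ?_).resolve_right (mul_ne_zero (sub_ne_zero.2 hyz) hsum)
    linear_combination slope hxy hy - slope hxz hz
  have hb : b = 0 := by simpa [hc] using slope hxy hy
  have ha : a = 0 := by simpa [hb, hc] using hx
  exact ⟨ha, hb, hc⟩

theorem sq_mul_eq_sq_mul_of_div_sqrt_eq {a b x y : ℝ} (hx : 0 < x) (hy : 0 < y)
    (h : a / √x = b / √y) : a ^ 2 * y = b ^ 2 * x := by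
  have hsq : (a / √x) ^ 2 = (b / √y) ^ 2 := by rw [h]
  rwa [div_pow, div_pow, Real.sq_sqrt hx.le, Real.sq_sqrt hy.le,
    div_eq_div_iff hx.ne' hy.ne'] at hsq

theorem mul_sq_mul_Fpot_sub_sq_mul_Fpot (M M' Q Q' Λ Λ' : ℝ) {r : ℝ} (hr : r ≠ 0) :
    r * (Q ^ 2 * Fpot M' Q' Λ' r - Q' ^ 2 * Fpot M Q Λ r) =
      2 * (Q' ^ 2 * M - Q ^ 2 * M') + (Q ^ 2 - Q' ^ 2) * r
        + (Q' ^ 2 * Λ - Q ^ 2 * Λ') / 3 * r ^ 3 := by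
  unfold Fpot
  field

theorem params_eq_of_sq_mul_Fpot_eq {M M' Q Q' Λ Λ' : ℝ} (hQ : Q ≠ 0) {S : Finset ℝ}
    (hcard : 2 < S.card) (hS : ∀ r ∈ S, 0 < r)
    (h : ∀ r ∈ S, Q ^ 2 * Fpot M' Q' Λ' r = Q' ^ 2 * Fpot M Q Λ r) :
    M = M' ∧ Q ^ 2 = Q' ^ 2 ∧ Λ = Λ' := by
  have hcubic (r : ℝ) (hr : r ∈ S) :
      2 * (Q' ^ 2 * M - Q ^ 2 * M') + (Q ^ 2 - Q' ^ 2) * r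
        + (Q' ^ 2 * Λ - Q ^ 2 * Λ') / 3 * r ^ 3 = 0 := by
    rw [← mul_sq_mul_Fpot_sub_sq_mul_Fpot _ _ _ _ _ _ (hS r hr).ne', h r hr, sub_self, mul_zero]
  obtain ⟨x, y, z, hx, hy, hz, hxy, hxz, hyz⟩ := Finset.two_lt_card_iff.1 hcard
  have hsum : x + y + z ≠ 0 := (add_pos (add_pos (hS x hx) (hS y hy)) (hS z hz)).ne'
  obtain ⟨hM, hQQ', hΛ⟩ := depressed_cubic_coeffs_eq_zero hxy hxz hyz hsum
    (hcubic x hx) (hcubic y hy) (hcubic z hz)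
  have hsq : Q ^ 2 = Q' ^ 2 := sub_eq_zero.1 hQQ'
  rw [← hsq] at hM hΛ
  have hQ2 : Q ^ 2 ≠ 0 := pow_ne_zero 2 hQ
  exact ⟨mul_left_cancel₀ hQ2 (by linarith), hsq, mul_left_cancel₀ hQ2 (by linarith)⟩

theorem stmt_14_general {M M' Q Q' Λ Λ' q : ℝ} (hQ : Q ≠ 0) (hq : q ≠ 0) {S : Finset ℝ}
    (hcard : 2 < S.card) (hS : ∀ r ∈ S, 0 < r)
    (hpos : ∀ r ∈ S, 0 < Fpot M Q Λ r ∧ 0 < Fpot M' Q' Λ' r)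
    (heq : ∀ r ∈ S, q * Q / √(Fpot M Q Λ r) = q * Q' / √(Fpot M' Q' Λ' r)) :
    M = M' ∧ Q = Q' ∧ Λ = Λ' := by
  have heq' (r : ℝ) (hr : r ∈ S) : Q / √(Fpot M Q Λ r) = Q' / √(Fpot M' Q' Λ' r) :=
    mul_left_cancel₀ hq (by simpa only [mul_div_assoc] using heq r hr)
  obtain ⟨rfl, hsq, rfl⟩ := params_eq_of_sq_mul_Fpot_eq hQ hcard hS fun r hr ↦
    sq_mul_eq_sq_mul_of_div_sqrt_eq (hpos r hr).1 (hpos r hr).2 (heq' r hr)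
  obtain ⟨r, hr⟩ : S.Nonempty := Finset.card_pos.1 (by lia)
  have hF : Fpot M Q' Λ r = Fpot M Q Λ r := by simp only [Fpot, hsq]
  have hQQ' : Q = Q' := by
    simpa only [hF, div_left_inj' (Real.sqrt_pos.2 (hpos r hr).1).ne'] using heq' r hr
  exact ⟨rfl, hQQ', rfl⟩

/-- If `Q ≠ 0`, `q ≠ 0` and `qQ/√F(r) = qQ̃/√F̃(r)` on a nonempty open
subinterval of `(0,∞)` where both `F` and `F̃` are positive, then the parameters coincide:
`M = M̃`, `Q = Q̃`, `Λ = Λ̃`. -/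
theorem stmt_14 (M M' Q Q' Λ Λ' q : ℝ)
    (hM : 0 < M) (hM' : 0 < M') (hQ : Q ≠ 0) (hΛ : 0 < Λ) (hΛ' : 0 < Λ')
    (hq : q ≠ 0)
    (r₀ r₁ : ℝ) (hr₀ : 0 < r₀) (hr₀₁ : r₀ < r₁)
    (hpos : ∀ r ∈ Set.Ioo r₀ r₁, 0 < Fpot M Q Λ r ∧ 0 < Fpot M' Q' Λ' r)
    (heq : ∀ r ∈ Set.Ioo r₀ r₁,
      q * Q / Real.sqrt (Fpot M Q Λ r) = q * Q' / Real.sqrt (Fpot M' Q' Λ' r)) :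
    M = M' ∧ Q = Q' ∧ Λ = Λ' := by
  obtain ⟨S, hS, hcard⟩ := (Set.Ioo_infinite hr₀₁).exists_subset_card_eq 3
  exact stmt_14_general hQ hq (by lia : 2 < S.card) (fun r hr ↦ hr₀.trans (hS hr).1)
    (fun r hr ↦ hpos r (hS hr)) (fun r hr ↦ heq r (hS hr))
end
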